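/- Let $Z \sim N_p(0,\Sigma)$ with $\Sigma \in \mathcal{F}_\alpha$, and let $|\bar{C}^{(\tau)}_{ij}| \le 2$. Define $g = \sum_{1\le i,j\le p} \bar{C}^{(\tau)}_{ij}\big[(z_i^2 - \sigma_{ii})(z_j^2 - \sigma_{jj}) - 2\sigma_{ij}^2\big]$; note $\mathbb{E} g = 0$. Then for any even $K_0 \ge 2$ there exists $C$ such that $\mathbb{E}[g^{K_0}] \le C\, p^{K_0}$. -/

import Mathlib

open MeasureTheory ProbabilityTheory Finset

noncomputable section

/-- `Z` is a centered Gaussian vector with covariance matrix `S`. -/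
def IsGaussianVec {Ω : Type*} [MeasureSpace Ω] {p : ℕ}
    (Z : Ω → Fin p → ℝ) (S : Matrix (Fin p) (Fin p) ℝ) : Prop :=
  ∀ a : Fin p → ℝ,
    Measure.map (fun ω => ∑ i, a i * Z ω i) (ℙ : Measure Ω)
      = gaussianReal 0 (∑ i, ∑ j, a i * S i j * a j).toNNReal

/-- All moments of `f` are finite. -/
def AllMom {E : Type*} [MeasurableSpace E] (μ : Measure E) (f : E → ℝ) : Prop :=
  ∀ q : ℕ, MemLp f q μ

namespace AllMom
variable {E : Type*} [MeasurableSpace E] {μ : Measure E} {f g : E → ℝ}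

lemma integrable (hf : AllMom μ f) : Integrable f μ := by
  have := hf 1
  rw [← memLp_one_iff_integrable]
  exact_mod_cast this

lemma add (hf : AllMom μ f) (hg : AllMom μ g) : AllMom μ (fun x => f x + g x) :=
  fun q => (hf q).add (hg q)

lemma sub (hf : AllMom μ f) (hg : AllMom μ g) : AllMom μ (fun x => f x - g x) :=
  fun q => (hf q).sub (hg q)

lemma const [IsFiniteMeasure μ] (c : ℝ) : AllMom μ (fun _ => c) :=
  fun _ => memLp_const c

lemma mul (hf : AllMom μ f) (hg : AllMom μ g) : AllMom μ (fun x => f x * g x) := by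
  intro q
  have : ENNReal.HolderTriple ((2 * q : ℕ) : ENNReal) ((2 * q : ℕ) : ENNReal) (q : ENNReal) := by
    constructor
    push_cast
    rw [ENNReal.mul_inv (by simp) (by simp), ← add_mul, ENNReal.inv_two_add_inv_two, one_mul]
  exact (hg (2 * q)).mul' (hf (2 * q))

lemma pow [IsFiniteMeasure μ] (hf : AllMom μ f) (n : ℕ) : AllMom μ (fun x => f x ^ n) := by
  induction n with
  | zero => simpa using const 1
  | succ n ih => simpa only [pow_succ] using ih.mul hf

lemma sum {ι : Type*} {s : Finset ι} {F : ι → E → ℝ} (h : ∀ i ∈ s, AllMom μ (F i)) :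
    AllMom μ (fun x => ∑ i ∈ s, F i x) :=
  fun q => memLp_finsetSum s fun i hi => h i hi q

lemma cmul [IsFiniteMeasure μ] (c : ℝ) (hf : AllMom μ f) : AllMom μ (fun x => c * f x) :=
  (const c).mul hf

end AllMom

/-- The even moments of the standard Gaussian. -/
def gm (n : ℕ) : ℝ := ∫ x, x ^ (2 * n) ∂(gaussianReal 0 1)

lemma gm_nonneg (n : ℕ) : 0 ≤ gm n :=
  integral_nonneg fun x => by
    show 0 ≤ x ^ (2 * n)
    rw [pow_mul]; positivity

lemma gm_one : gm 1 = 1 := by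
  have h := variance_id_gaussianReal (μ := 0) (v := 1)
  rw [variance_eq_integral (by fun_prop)] at h
  simpa [gm] using h

lemma gaussian_moment (v : ℝ) (hv : 0 ≤ v) (n : ℕ) :
    ∫ x, x ^ (2 * n) ∂(gaussianReal 0 v.toNNReal) = gm n * v ^ n := by
  have h := gaussianReal_map_const_mul (μ := 0) (v := 1) (Real.sqrt v)
  have h2 : (NNReal.mk (Real.sqrt v ^ 2) (sq_nonneg _) * 1 : NNReal) = v.toNNReal := by
    ext; simp [Real.sq_sqrt hv, hv]
  rw [h2, mul_zero] at h
  rw [← h, integral_map (by fun_prop) (by fun_prop)]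
  simp_rw [mul_pow]
  rw [integral_const_mul, pow_mul, Real.sq_sqrt hv, gm, mul_comm]

/-- Bundle of the hypotheses on the Gaussian law. -/
structure GS {p : ℕ} (S : Matrix (Fin p) (Fin p) ℝ) (M₀ : ℝ) (μ : Measure (Fin p → ℝ)) : Prop where
  symm : S.IsSymm
  psd : ∀ v : Fin p → ℝ, 0 ≤ ∑ i, ∑ j, v i * S i j * v j
  ub : ∀ v : Fin p → ℝ, ∑ i, ∑ j, v i * S i j * v j ≤ M₀ * ∑ i, v i ^ 2
  gauss : ∀ a : Fin p → ℝ, μ.map (fun z => ∑ i, a i * z i)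
      = gaussianReal 0 (∑ i, ∑ j, a i * S i j * a j).toNNReal

namespace GS
variable {p : ℕ} {S : Matrix (Fin p) (Fin p) ℝ} {M₀ : ℝ} {μ : Measure (Fin p → ℝ)}

lemma map_dual (h : GS S M₀ μ) (L : (Fin p → ℝ) →L[ℝ] ℝ) :
    ∃ v : NNReal, μ.map L = gaussianReal 0 v := by
  refine ⟨(∑ i, ∑ j, L (Pi.single i 1) * S i j * L (Pi.single j 1)).toNNReal, ?_⟩
  · rw [← h.gauss (fun i => L (Pi.single i 1))]
    congr 1
    ext z
    conv_lhs => rw [← Finset.univ_sum_single z, map_sum]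
    refine Finset.sum_congr rfl fun i _ => ?_
    have : Pi.single i (z i) = z i • (Pi.single i (1 : ℝ) : Fin p → ℝ) := by
      rw [← Pi.single_smul]; simp
    rw [this, map_smul, smul_eq_mul, mul_comm]

lemma isGaussian (h : GS S M₀ μ) : IsGaussian μ :=
  isGaussian_of_map_eq_gaussianReal fun L => ⟨0, h.map_dual L⟩

lemma integral_dual (h : GS S M₀ μ) (L : (Fin p → ℝ) →L[ℝ] ℝ) : ∫ z, L z ∂μ = 0 := by
  obtain ⟨v, hv⟩ := h.map_dual L
  have : ∫ x, x ∂(μ.map L) = ∫ z, L z ∂μ := integral_map (by fun_prop) (by fun_prop)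
  rw [← this, hv, integral_id_gaussianReal]

lemma rot (h : GS S M₀ μ) (F : (Fin p → ℝ) × (Fin p → ℝ) → ℝ) (hF : Continuous F) :
    ∫ x, F ((√2)⁻¹ • (x.1 + x.2), (√2)⁻¹ • (x.2 - x.1)) ∂(μ.prod μ) = ∫ x, F x ∂(μ.prod μ) := by
  have := h.isGaussian
  have h1 := IsGaussian.map_rotation_eq_self_of_forall_strongDual_eq_zero h.integral_dual
    (Real.pi / 4)
  conv_rhs => rw [← h1]
  rw [integral_map (by fun_prop) hF.measurable.aestronglyMeasurable]
  congr 1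
  ext x
  congr 1
  have h2 : √2 / 2 = (√2)⁻¹ := by
    have : √2 * √2 = 2 := Real.mul_self_sqrt (by norm_num)
    field_simp; nlinarith
  rw [ContinuousLinearMap.rotation_apply, Real.cos_pi_div_four, Real.sin_pi_div_four, h2]
  ext i <;> simp <;> ring

lemma moment (h : GS S M₀ μ) (a : Fin p → ℝ) (n : ℕ) :
    ∫ z, (∑ i, a i * z i) ^ (2 * n) ∂μ = gm n * (∑ i, ∑ j, a i * S i j * a j) ^ n := by
  rw [← gaussian_moment _ (h.psd a), ← h.gauss a, integral_map _ (by fun_prop)]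
  exact (by fun_prop : Measurable (fun z : Fin p → ℝ => ∑ i, a i * z i)).aemeasurable

lemma moment_le (h : GS S M₀ μ) (a : Fin p → ℝ) (n : ℕ) :
    ∫ z, (∑ i, a i * z i) ^ (2 * n) ∂μ ≤ gm n * M₀ ^ n * (∑ i, a i ^ 2) ^ n := by
  rw [h.moment, mul_assoc, ← mul_pow]
  have := gm_nonneg n
  have := h.psd a
  gcongr
  exact h.ub a

lemma coord_moment_le (h : GS S M₀ μ) (i : Fin p) (n : ℕ) :
    ∫ z, z i ^ (2 * n) ∂μ ≤ gm n * M₀ ^ n := by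
  have := h.moment_le (Pi.single i 1) n
  simpa [Pi.single_apply] using this

lemma coord (h : GS S M₀ μ) (i : Fin p) : AllMom μ (fun z => z i) := by
  have := h.isGaussian
  exact fun q => IsGaussian.memLp_dual μ (ContinuousLinearMap.proj i) q (by simp)

lemma coord_fst (h : GS S M₀ μ) (i : Fin p) : AllMom (μ.prod μ) (fun z => z.1 i) := by
  have := h.isGaussian
  exact fun q => IsGaussian.memLp_dual (μ.prod μ)
    ((ContinuousLinearMap.proj i).comp (ContinuousLinearMap.fst ℝ _ _)) q (by simp)

lemma coord_snd (h : GS S M₀ μ) (i : Fin p) : AllMom (μ.prod μ) (fun z => z.2 i) := by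
  have := h.isGaussian
  exact fun q => IsGaussian.memLp_dual (μ.prod μ)
    ((ContinuousLinearMap.proj i).comp (ContinuousLinearMap.snd ℝ _ _)) q (by simp)

lemma integral_sq (h : GS S M₀ μ) (i : Fin p) : ∫ z, z i ^ 2 ∂μ = S i i := by
  have := h.moment (Pi.single i 1) 1
  simpa [Pi.single_apply, gm_one] using this

lemma integral_mul (h : GS S M₀ μ) (i j : Fin p) : ∫ z, z i * z j ∂μ = S i j := by
  have := h.isGaussian
  have h1 := h.moment (Pi.single i 1 + Pi.single j 1) 1
  have h2 : ∫ z, (z i + z j) ^ 2 ∂μ = S i i + S j j + 2 * S i j := by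
    have hs : S j i = S i j := h.symm.apply i j
    have e1 : ∀ z : Fin p → ℝ, ∑ k, (Pi.single i 1 + Pi.single j 1 : Fin p → ℝ) k * z k = z i + z j := by
      intro z; simp [Pi.single_apply, add_mul, Finset.sum_add_distrib]
    have e2 : ∑ k, ∑ l, (Pi.single i 1 + Pi.single j 1 : Fin p → ℝ) k * S k l *
      (Pi.single i 1 + Pi.single j 1 : Fin p → ℝ) l = S i i + S j j + 2 * S i j := by
      simp [Pi.single_apply, add_mul, mul_add, Finset.sum_add_distrib]
      rw [hs]; ring
    simp only [e1, e2, gm_one] at h1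
    simpa using h1
  have h3 : ∫ z, (z i + z j) ^ 2 ∂μ = ∫ z, z i ^ 2 + z j ^ 2 + 2 * (z i * z j) ∂μ := by
    congr 1; ext z; ring
  rw [integral_add, integral_add, integral_const_mul, h.integral_sq, h.integral_sq, h2] at h3
  · linarith
  · exact ((h.coord i).pow 2).integrable
  · exact ((h.coord j).pow 2).integrable
  · exact (((h.coord i).pow 2).add ((h.coord j).pow 2)).integrable
  · exact (((h.coord i).mul (h.coord j)).cmul 2).integrable

end GS

lemma AllMom.fst {E : Type*} [MeasurableSpace E] {μ : Measure E} [IsProbabilityMeasure μ]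
    {f : E → ℝ} (hf : AllMom μ f) : AllMom (μ.prod μ) (fun x => f x.1) :=
  fun q => (hf q).comp_measurePreserving measurePreserving_fst

lemma AllMom.snd {E : Type*} [MeasurableSpace E] {μ : Measure E} [IsProbabilityMeasure μ]
    {f : E → ℝ} (hf : AllMom μ f) : AllMom (μ.prod μ) (fun x => f x.2) :=
  fun q => (hf q).comp_measurePreserving measurePreserving_snd

/-- Symmetrization. -/
lemma symmetrize {E : Type*} [MeasurableSpace E] {μ : Measure E} [IsProbabilityMeasure μ]
    {f : E → ℝ} (hf : AllMom μ f) (h0 : ∫ x, f x ∂μ = 0) (n : ℕ) :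
    ∫ x, f x ^ (2 * n) ∂μ ≤ ∫ x, (f x.1 - f x.2) ^ (2 * n) ∂(μ.prod μ) := by
  have hI : Integrable (fun x : E × E => (f x.1 - f x.2) ^ (2 * n)) (μ.prod μ) :=
    ((hf.fst.sub hf.snd).pow (2 * n)).integrable
  rw [integral_prod _ hI]
  refine integral_mono (hf.pow _).integrable hI.integral_prod_left fun x => ?_
  have hx : AllMom μ (fun y => f x - f y) := (AllMom.const (f x)).sub hf
  have h1 : ∫ y, (f x - f y) ∂μ = f x := by
    rw [integral_sub (integrable_const _) hf.integrable, h0]; simp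
  have h2 := ConvexOn.map_integral_le (μ := μ) (f := fun y => f x - f y)
    ((even_two_mul n).convexOn_pow (𝕜 := ℝ))
    (by fun_prop) isClosed_univ (by simp) hx.integrable (hx.pow (2 * n)).integrable
  simp only [h1] at h2
  exact h2

namespace GS
variable {p : ℕ} {S : Matrix (Fin p) (Fin p) ℝ} {M₀ : ℝ} {μ : Measure (Fin p → ℝ)}

lemma bilin (h : GS S M₀ μ) (a : Fin p → (Fin p → ℝ) → ℝ) (ha : ∀ i, AllMom μ (a i)) (n : ℕ) :
    ∫ x, (∑ i, a i x.1 * x.2 i) ^ (2 * n) ∂(μ.prod μ)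
      ≤ gm n * M₀ ^ n * ∫ v, (∑ i, a i v ^ 2) ^ n ∂μ := by
  have := h.isGaussian
  have hI : Integrable (fun x : (Fin p → ℝ) × (Fin p → ℝ) => (∑ i, a i x.1 * x.2 i) ^ (2 * n))
      (μ.prod μ) :=
    ((AllMom.sum fun i _ => (ha i).fst.mul (h.coord_snd i)).pow (2 * n)).integrable
  rw [integral_prod _ hI, ← integral_const_mul]
  refine integral_mono hI.integral_prod_left ?_ fun v => h.moment_le (fun i => a i v) n
  exact (((AllMom.sum fun i _ => (ha i).pow 2).pow n).cmul _).integrable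

lemma w_mom (h : GS S M₀ μ) (i : Fin p) : AllMom μ (fun z => z i ^ 2 - S i i) := by
  have := h.isGaussian
  exact ((h.coord i).pow 2).sub (AllMom.const _)

lemma w_int (h : GS S M₀ μ) (i : Fin p) : ∫ z, (z i ^ 2 - S i i) ∂μ = 0 := by
  have := h.isGaussian
  rw [integral_sub ((h.coord i).pow 2).integrable (integrable_const _), h.integral_sq]
  simp

lemma rot_prod (x : (Fin p → ℝ) × (Fin p → ℝ)) (i : Fin p) :
    ((√2)⁻¹ • (x.1 + x.2)) i * ((√2)⁻¹ • (x.2 - x.1)) i = (x.2 i ^ 2 - x.1 i ^ 2) / 2 := by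
  have : (√2)⁻¹ * (√2)⁻¹ = (1 / 2 : ℝ) := by
    rw [← mul_inv, Real.mul_self_sqrt (by norm_num)]; norm_num
  simp only [Pi.smul_apply, Pi.add_apply, Pi.sub_apply, smul_eq_mul]
  linear_combination (x.1 i + x.2 i) * (x.2 i - x.1 i) * this

lemma rot_sum (x : (Fin p → ℝ) × (Fin p → ℝ)) (i : Fin p) :
    ((√2)⁻¹ • (x.1 + x.2)) i ^ 2 + ((√2)⁻¹ • (x.2 - x.1)) i ^ 2 = x.1 i ^ 2 + x.2 i ^ 2 := by
  have : (√2)⁻¹ * (√2)⁻¹ = (1 / 2 : ℝ) := by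
    rw [← mul_inv, Real.mul_self_sqrt (by norm_num)]; norm_num
  simp only [Pi.smul_apply, Pi.add_apply, Pi.sub_apply, smul_eq_mul]
  linear_combination ((x.1 i + x.2 i) ^ 2 + (x.2 i - x.1 i) ^ 2) * this

/-- Isserlis identity. -/
lemma isserlis (h : GS S M₀ μ) (i j : Fin p) :
    ∫ z, (z i ^ 2 - S i i) * (z j ^ 2 - S j j) ∂μ = 2 * S i j ^ 2 := by
  have := h.isGaussian
  have h1 := h.rot (fun u => 4 * ((u.1 i * u.1 j) * (u.2 i * u.2 j))) (by fun_prop)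
  rw [integral_const_mul (4 : ℝ) (fun u : (Fin p → ℝ) × (Fin p → ℝ) =>
    (u.1 i * u.1 j) * (u.2 i * u.2 j)),
    integral_prod_mul (fun u : Fin p → ℝ => u i * u j) (fun u : Fin p → ℝ => u i * u j),
    h.integral_mul] at h1
  have h2 : ∀ x : (Fin p → ℝ) × (Fin p → ℝ),
      4 * ((((√2)⁻¹ • (x.1 + x.2)) i * ((√2)⁻¹ • (x.1 + x.2)) j) *
        (((√2)⁻¹ • (x.2 - x.1)) i * ((√2)⁻¹ • (x.2 - x.1)) j))
      = ((x.1 i ^ 2 - S i i) * (x.1 j ^ 2 - S j j) * 1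
        + 1 * ((x.2 i ^ 2 - S i i) * (x.2 j ^ 2 - S j j)))
        - ((x.1 i ^ 2 - S i i) * (x.2 j ^ 2 - S j j)
        + (x.1 j ^ 2 - S j j) * (x.2 i ^ 2 - S i i)) := by
    intro x
    have e1 := rot_prod x i
    have e2 := rot_prod x j
    calc _ = 4 * ((((√2)⁻¹ • (x.1 + x.2)) i * ((√2)⁻¹ • (x.2 - x.1)) i) *
        (((√2)⁻¹ • (x.1 + x.2)) j * ((√2)⁻¹ • (x.2 - x.1)) j)) := by ring
      _ = _ := by rw [e1, e2]; ring
  simp only [h2] at h1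
  have m1 := (((h.w_mom i).mul (h.w_mom j)).fst).mul (AllMom.const 1)
  have m2 := (AllMom.const 1).mul (((h.w_mom i).mul (h.w_mom j)).snd)
  have m3 := (h.w_mom i).fst.mul (h.w_mom j).snd
  have m4 := (h.w_mom j).fst.mul (h.w_mom i).snd
  rw [integral_sub (m1.add m2).integrable (m3.add m4).integrable,
    integral_add m1.integrable m2.integrable, integral_add m3.integrable m4.integrable,
    integral_prod_mul (fun z : Fin p → ℝ => (z i ^ 2 - S i i) * (z j ^ 2 - S j j)) (fun _ => (1:ℝ)),
    integral_prod_mul (fun _ => (1:ℝ)) (fun z : Fin p → ℝ => (z i ^ 2 - S i i) * (z j ^ 2 - S j j)),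
    integral_prod_mul (fun z : Fin p → ℝ => (z i ^ 2 - S i i)) (fun z : Fin p → ℝ => (z j ^ 2 - S j j)),
    integral_prod_mul (fun z : Fin p → ℝ => (z j ^ 2 - S j j)) (fun z : Fin p → ℝ => (z i ^ 2 - S i i)),
    h.w_int, h.w_int] at h1
  simp at h1
  linarith

lemma lin (h : GS S M₀ μ) (hM₀ : 0 < M₀) (c : Fin p → ℝ) (hc : ∀ i, |c i| ≤ 2) (k : ℕ) :
    ∫ z, (∑ i, c i * (z i ^ 2 - S i i)) ^ (2 * (k + 1)) ∂μ
      ≤ (4 ^ (k + 1) * (gm (k + 1) * M₀ ^ (k + 1))) ^ 2 * (p : ℝ) ^ (k + 1) := by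
  have := h.isGaussian
  have hA : AllMom μ (fun z => ∑ i, c i * (z i ^ 2 - S i i)) :=
    AllMom.sum fun i _ => (h.w_mom i).cmul _
  have h0 : ∫ z, (∑ i, c i * (z i ^ 2 - S i i)) ∂μ = 0 := by
    rw [integral_finsetSum _ fun i _ => ((h.w_mom i).cmul _).integrable]
    simp [integral_const_mul, h.w_int]
  have hg := gm_nonneg (k + 1)
  have hc2 : ∀ i, c i ^ 2 ≤ 4 := fun i => by
    have := sq_le_sq' (neg_le_of_abs_le (hc i)) (le_of_abs_le (hc i)); linarith
  refine (symmetrize hA h0 (k + 1)).trans ?_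
  have h1 := h.rot (fun u => 4 ^ (k + 1) * (∑ i, c i * u.1 i * u.2 i) ^ (2 * (k + 1)))
    (by fun_prop)
  have h2 : ∀ x : (Fin p → ℝ) × (Fin p → ℝ), (∑ i, c i * (x.1 i ^ 2 - S i i)
      - ∑ i, c i * (x.2 i ^ 2 - S i i)) ^ (2 * (k + 1)) =
      4 ^ (k + 1) * (∑ i, c i * ((√2)⁻¹ • (x.1 + x.2)) i * ((√2)⁻¹ • (x.2 - x.1)) i)
        ^ (2 * (k + 1)) := by
    intro x
    simp only [mul_assoc (c _), rot_prod]
    have : ∑ i, c i * (x.1 i ^ 2 - S i i) - ∑ i, c i * (x.2 i ^ 2 - S i i)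
      = (-2) * ∑ i, c i * ((x.2 i ^ 2 - x.1 i ^ 2) / 2) := by
      rw [← Finset.sum_sub_distrib, Finset.mul_sum]
      exact Finset.sum_congr rfl fun i _ => by ring
    rw [this, mul_pow, pow_mul (-2 : ℝ)]
    norm_num
  simp only [h2]
  rw [h1, integral_const_mul]
  have h3 := h.bilin (fun i v => c i * v i) (fun i => (h.coord i).cmul _) (k + 1)
  have h4 : ∫ v, (∑ i, (c i * v i) ^ 2) ^ (k + 1) ∂μ
      ≤ ∫ v, 4 ^ (k + 1) * ((p : ℝ) ^ k * ∑ i, v i ^ (2 * (k + 1))) ∂μ := by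
    refine integral_mono ((AllMom.sum fun i _ => ((h.coord i).cmul _).pow 2).pow _).integrable
      (((AllMom.sum fun i _ => (h.coord i).pow _).cmul _).cmul _).integrable fun v => ?_
    have e1 : ∑ i, (c i * v i) ^ 2 ≤ 4 * ∑ i, v i ^ 2 := by
      rw [Finset.mul_sum]
      refine Finset.sum_le_sum fun i _ => ?_
      rw [mul_pow]
      exact mul_le_mul_of_nonneg_right (hc2 i) (sq_nonneg _)
    have e2 := pow_sum_le_card_mul_sum_pow (s := Finset.univ) (f := fun i => v i ^ 2)
      (fun i _ => sq_nonneg _) k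
    simp only [← pow_mul, Finset.card_univ, Fintype.card_fin] at e2
    calc (∑ i, (c i * v i) ^ 2) ^ (k + 1) ≤ (4 * ∑ i, v i ^ 2) ^ (k + 1) := by
          gcongr
      _ ≤ _ := by rw [mul_pow]; gcongr
  have h5 : ∫ v, 4 ^ (k + 1) * ((p : ℝ) ^ k * ∑ i, v i ^ (2 * (k + 1))) ∂μ
      ≤ 4 ^ (k + 1) * ((p : ℝ) ^ k * (p * (gm (k + 1) * M₀ ^ (k + 1)))) := by
    rw [integral_const_mul, integral_const_mul,
      integral_finsetSum _ fun i _ => ((h.coord i).pow _).integrable]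
    gcongr
    refine (Finset.sum_le_sum fun i _ => h.coord_moment_le i (k + 1)).trans ?_
    simp
  calc _ ≤ 4 ^ (k + 1) * (gm (k + 1) * M₀ ^ (k + 1) *
        (4 ^ (k + 1) * ((p : ℝ) ^ k * (p * (gm (k + 1) * M₀ ^ (k + 1)))))) := by
        gcongr
        refine h3.trans ?_
        gcongr
        exact h4.trans h5
    _ = _ := by ring

end GS

/-- The constant in the bound for linear forms in the squares. -/
def linC (M₀ : ℝ) (n : ℕ) : ℝ := (4 ^ n * (gm n * M₀ ^ n)) ^ 2

/-- The constant for the decoupled quartic form. -/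
def quadC (M₀ : ℝ) (n : ℕ) : ℝ := gm n * M₀ ^ n * (gm (2 * n) * M₀ ^ (2 * n) + linC M₀ (2 * n))

lemma quadC_nonneg (M₀ : ℝ) (hM₀ : 0 < M₀) (n : ℕ) : 0 ≤ quadC M₀ n := by
  have := gm_nonneg n
  have := gm_nonneg (2 * n)
  unfold quadC linC
  positivity

lemma sym_identity {p : ℕ} (C : Matrix (Fin p) (Fin p) ℝ) (x y : Fin p → ℝ) :
    ∑ i, ∑ j, C i j * (x i * x j) - ∑ i, ∑ j, C i j * (y i * y j)
      = ∑ i, ∑ j, ((C i j + C j i) / 2) * ((x i - y i) * (x j + y j)) := by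
  have h1 : ∑ i, ∑ j, ((C i j + C j i) / 2) * ((x i - y i) * (x j + y j))
      = ∑ i, ∑ j, (C i j / 2) * ((x i - y i) * (x j + y j))
        + ∑ i, ∑ j, (C j i / 2) * ((x i - y i) * (x j + y j)) := by
    simp only [← Finset.sum_add_distrib]
    exact Finset.sum_congr rfl fun i _ => Finset.sum_congr rfl fun j _ => by ring
  rw [h1, Finset.sum_comm (f := fun i j => (C j i / 2) * ((x i - y i) * (x j + y j)))]
  simp only [← Finset.sum_add_distrib, ← Finset.sum_sub_distrib]
  exact Finset.sum_congr rfl fun i _ => Finset.sum_congr rfl fun j _ => by ring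

namespace GS
variable {p : ℕ} {S : Matrix (Fin p) (Fin p) ℝ} {M₀ : ℝ} {μ : Measure (Fin p → ℝ)}

lemma ell_mom (h : GS S M₀ μ) (c : Fin p → ℝ) :
    AllMom μ (fun z => ∑ j, c j * (z j ^ 2 - S j j)) := by
  have := h.isGaussian
  exact AllMom.sum fun i _ => (h.w_mom i).cmul _

lemma decoupled (h : GS S M₀ μ) (hM₀ : 0 < M₀) (hp : 0 < p) (C : Matrix (Fin p) (Fin p) ℝ)
    (hC : ∀ i j, |C i j| ≤ 2) (k : ℕ) :
    ∫ x, (∑ i, (x.1 i * ∑ j, C i j * (x.1 j ^ 2 - S j j)) * x.2 i) ^ (2 * (k + 1)) ∂(μ.prod μ)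
      ≤ quadC M₀ (k + 1) * (p : ℝ) ^ (2 * (k + 1)) := by
  have := h.isGaussian
  have hp' : (0 : ℝ) < p := by exact_mod_cast hp
  have hg := gm_nonneg (k + 1)
  have h1 := h.bilin (fun i v => v i * ∑ j, C i j * (v j ^ 2 - S j j))
    (fun i => (h.coord i).mul (h.ell_mom (C i))) (k + 1)
  set B : ℝ := gm (2 * (k + 1)) * M₀ ^ (2 * (k + 1)) + linC M₀ (2 * (k + 1)) with hB
  set P : ℝ := (p : ℝ) ^ (k + 1) with hP
  have hPpos : 0 < P := by positivity
  have hterm : ∀ i : Fin p, ∫ v, (v i * ∑ j, C i j * (v j ^ 2 - S j j)) ^ (2 * (k + 1)) ∂μ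
      ≤ P * B := by
    intro i
    have m1 := ((h.coord i).pow (2 * (2 * (k + 1)))).cmul P
    have m2 := ((h.ell_mom (C i)).pow (2 * (2 * (k + 1)))).cmul P⁻¹
    have e1 : ∫ v, (v i * ∑ j, C i j * (v j ^ 2 - S j j)) ^ (2 * (k + 1)) ∂μ
        ≤ ∫ v, (P * v i ^ (2 * (2 * (k + 1)))
          + P⁻¹ * (∑ j, C i j * (v j ^ 2 - S j j)) ^ (2 * (2 * (k + 1)))) ∂μ := by
      refine integral_mono (((h.coord i).mul (h.ell_mom (C i))).pow _).integrable
        (m1.add m2).integrable fun v => ?_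
      simp only
      rw [mul_pow, mul_comm 2 (2 * (k + 1)), pow_mul _ (2 * (k + 1)) 2, pow_mul _ (2 * (k + 1)) 2]
      generalize v i ^ (2 * (k + 1)) = a
      generalize (∑ j, C i j * (v j ^ 2 - S j j)) ^ (2 * (k + 1)) = b
      have e3 : P * a ^ 2 + P⁻¹ * b ^ 2 - a * b
          = P * (a - P⁻¹ * b / 2) ^ 2 + 3 / 4 * P⁻¹ * b ^ 2 := by
        field_simp; ring
      have e4 : 0 ≤ P * (a - P⁻¹ * b / 2) ^ 2 + 3 / 4 * P⁻¹ * b ^ 2 := by positivity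
      linarith
    refine e1.trans ?_
    rw [integral_add m1.integrable m2.integrable, integral_const_mul, integral_const_mul]
    have e5 := h.coord_moment_le i (2 * (k + 1))
    have e6 : ∫ z, (∑ j, C i j * (z j ^ 2 - S j j)) ^ (2 * (2 * (k + 1))) ∂μ
      ≤ linC M₀ (2 * (k + 1)) * (p : ℝ) ^ (2 * (k + 1)) := h.lin hM₀ (C i) (hC i) (2 * k + 1)
    have e7 : (p : ℝ) ^ (2 * (k + 1)) = P * P := by rw [hP]; ring
    rw [e7] at e6
    calc _ ≤ P * (gm (2 * (k + 1)) * M₀ ^ (2 * (k + 1)))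
          + P⁻¹ * (linC M₀ (2 * (k + 1)) * (P * P)) := by gcongr
      _ = P * B := by rw [hB]; field_simp
  have h4 : ∫ v, (∑ i, (v i * ∑ j, C i j * (v j ^ 2 - S j j)) ^ 2) ^ (k + 1) ∂μ
      ≤ ∫ v, (p : ℝ) ^ k * ∑ i, (v i * ∑ j, C i j * (v j ^ 2 - S j j)) ^ (2 * (k + 1)) ∂μ := by
    refine integral_mono
      ((AllMom.sum fun i _ => ((h.coord i).mul (h.ell_mom (C i))).pow 2).pow _).integrable
      ((AllMom.sum fun i _ => ((h.coord i).mul (h.ell_mom (C i))).pow _).cmul _).integrable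
      fun v => ?_
    have e2 := pow_sum_le_card_mul_sum_pow (s := Finset.univ)
      (f := fun i => (v i * ∑ j, C i j * (v j ^ 2 - S j j)) ^ 2) (fun i _ => sq_nonneg _) k
    simpa only [← pow_mul, Finset.card_univ, Fintype.card_fin] using e2
  have h5 : ∫ v, (p : ℝ) ^ k * ∑ i, (v i * ∑ j, C i j * (v j ^ 2 - S j j)) ^ (2 * (k + 1)) ∂μ
      ≤ (p : ℝ) ^ k * (p * (P * B)) := by
    rw [integral_const_mul, integral_finsetSum _ fun i _ =>
      (((h.coord i).mul (h.ell_mom (C i))).pow _).integrable]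
    gcongr
    refine (Finset.sum_le_sum fun i _ => hterm i).trans ?_
    simp
  refine h1.trans ?_
  calc _ ≤ gm (k + 1) * M₀ ^ (k + 1) * ((p : ℝ) ^ k * (p * (P * B))) := by
        gcongr
        exact h4.trans h5
    _ = _ := by rw [hP, quadC, ← hB]; ring

lemma main (h : GS S M₀ μ) (hM₀ : 0 < M₀) (hp : 0 < p) (C : Matrix (Fin p) (Fin p) ℝ)
    (hC : ∀ i j, |C i j| ≤ 2) (k : ℕ) :
    ∫ z, (∑ i, ∑ j, C i j * ((z i ^ 2 - S i i) * (z j ^ 2 - S j j) - 2 * S i j ^ 2))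
        ^ (2 * (k + 1)) ∂μ
      ≤ (2 * 16 ^ (k + 1) * quadC M₀ (k + 1)) * (p : ℝ) ^ (2 * (k + 1)) := by
  have := h.isGaussian
  have m0 : ∀ i j, AllMom μ (fun z : Fin p → ℝ =>
      C i j * ((z i ^ 2 - S i i) * (z j ^ 2 - S j j) - 2 * S i j ^ 2)) := fun i j =>
    (((h.w_mom i).mul (h.w_mom j)).sub (AllMom.const _)).cmul _
  have hA : AllMom μ (fun z : Fin p → ℝ =>
      ∑ i, ∑ j, C i j * ((z i ^ 2 - S i i) * (z j ^ 2 - S j j) - 2 * S i j ^ 2)) :=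
    AllMom.sum fun i _ => AllMom.sum fun j _ => m0 i j
  have h0 : ∫ z, (∑ i, ∑ j, C i j * ((z i ^ 2 - S i i) * (z j ^ 2 - S j j) - 2 * S i j ^ 2)) ∂μ
      = 0 := by
    rw [integral_finsetSum _ fun i _ => (AllMom.sum fun j _ => m0 i j).integrable]
    refine Finset.sum_eq_zero fun i _ => ?_
    rw [integral_finsetSum _ fun j _ => (m0 i j).integrable]
    refine Finset.sum_eq_zero fun j _ => ?_
    rw [integral_const_mul, integral_sub ((h.w_mom i).mul (h.w_mom j)).integrable
      (integrable_const _), h.isserlis]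
    simp
  refine (symmetrize hA h0 (k + 1)).trans ?_
  set D : Matrix (Fin p) (Fin p) ℝ := fun i j => (C i j + C j i) / 2 with hD
  have hD2 : ∀ i j, |D i j| ≤ 2 := by
    intro i j
    have h1 := abs_le.1 (hC i j)
    have h2 := abs_le.1 (hC j i)
    rw [abs_le]; simp only [hD]
    constructor <;> linarith [h1.1, h1.2, h2.1, h2.2]
  have h1 := h.rot (fun u => ((-2) * (∑ i, (u.1 i * ∑ j, D i j * (u.1 j ^ 2 - S j j)) * u.2 i
    + ∑ i, (u.2 i * ∑ j, D i j * (u.2 j ^ 2 - S j j)) * u.1 i)) ^ (2 * (k + 1))) (by fun_prop)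
  have h2 : ∀ x : (Fin p → ℝ) × (Fin p → ℝ),
      (∑ i, ∑ j, C i j * ((x.1 i ^ 2 - S i i) * (x.1 j ^ 2 - S j j) - 2 * S i j ^ 2)
      - ∑ i, ∑ j, C i j * ((x.2 i ^ 2 - S i i) * (x.2 j ^ 2 - S j j) - 2 * S i j ^ 2)) =
      (-2) * (∑ i, (((√2)⁻¹ • (x.1 + x.2)) i *
          ∑ j, D i j * (((√2)⁻¹ • (x.1 + x.2)) j ^ 2 - S j j)) * ((√2)⁻¹ • (x.2 - x.1)) i
        + ∑ i, (((√2)⁻¹ • (x.2 - x.1)) i *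
          ∑ j, D i j * (((√2)⁻¹ • (x.2 - x.1)) j ^ 2 - S j j)) * ((√2)⁻¹ • (x.1 + x.2)) i) := by
    intro x
    have e1 := rot_prod x
    have e2 := rot_sum x
    generalize ((√2)⁻¹ • (x.1 + x.2)) = V at e1 e2 ⊢
    generalize ((√2)⁻¹ • (x.2 - x.1)) = U at e1 e2 ⊢
    have e3 := sym_identity C (fun i => x.1 i ^ 2 - S i i) (fun i => x.2 i ^ 2 - S i i)
    simp only [mul_sub (C _ _), Finset.sum_sub_distrib, sub_sub_sub_cancel_right]
    simp only [mul_sub (C _ _), Finset.sum_sub_distrib, sub_sub_sub_cancel_right] at e3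
    rw [e3, ← Finset.sum_add_distrib, Finset.mul_sum]
    refine Finset.sum_congr rfl fun i _ => ?_
    have e4 : -2 * (V i * (∑ j, D i j * (V j ^ 2 - S j j)) * U i
        + U i * (∑ j, D i j * (U j ^ 2 - S j j)) * V i)
        = (-2 * (V i * U i)) * (∑ j, D i j * (V j ^ 2 - S j j)
          + ∑ j, D i j * (U j ^ 2 - S j j)) := by ring
    rw [e4, e1, ← Finset.sum_add_distrib, Finset.mul_sum]
    refine Finset.sum_congr rfl fun j _ => ?_
    simp only [hD]
    linear_combination (-(C i j + C j i) / 2) * (x.1 i ^ 2 - x.2 i ^ 2) * e2 j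
  simp only [h2]
  rw [h1]
  have mT1 : AllMom (μ.prod μ) (fun u : (Fin p → ℝ) × (Fin p → ℝ) =>
      ∑ i, (u.1 i * ∑ j, D i j * (u.1 j ^ 2 - S j j)) * u.2 i) :=
    AllMom.sum fun i _ => ((h.coord i).mul (h.ell_mom (D i))).fst.mul (h.coord_snd i)
  have mT2 : AllMom (μ.prod μ) (fun u : (Fin p → ℝ) × (Fin p → ℝ) =>
      ∑ i, (u.2 i * ∑ j, D i j * (u.2 j ^ 2 - S j j)) * u.1 i) :=
    AllMom.sum fun i _ => ((h.coord i).mul (h.ell_mom (D i))).snd.mul (h.coord_fst i)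
  have hT1 := h.decoupled hM₀ hp D hD2 k
  have hT2 : ∫ u : (Fin p → ℝ) × (Fin p → ℝ),
      (∑ i, (u.2 i * ∑ j, D i j * (u.2 j ^ 2 - S j j)) * u.1 i) ^ (2 * (k + 1)) ∂(μ.prod μ)
      = ∫ u : (Fin p → ℝ) × (Fin p → ℝ),
      (∑ i, (u.1 i * ∑ j, D i j * (u.1 j ^ 2 - S j j)) * u.2 i) ^ (2 * (k + 1)) ∂(μ.prod μ) :=
    integral_prod_swap (μ := μ) (ν := μ) (fun u : (Fin p → ℝ) × (Fin p → ℝ) =>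
      (∑ i, (u.1 i * ∑ j, D i j * (u.1 j ^ 2 - S j j)) * u.2 i) ^ (2 * (k + 1)))
  calc _ ≤ ∫ u : (Fin p → ℝ) × (Fin p → ℝ), 16 ^ (k + 1) *
        ((∑ i, (u.1 i * ∑ j, D i j * (u.1 j ^ 2 - S j j)) * u.2 i) ^ (2 * (k + 1))
        + (∑ i, (u.2 i * ∑ j, D i j * (u.2 j ^ 2 - S j j)) * u.1 i) ^ (2 * (k + 1)))
          ∂(μ.prod μ) := by
        refine integral_mono (((mT1.add mT2).cmul _).pow _).integrable
          (((mT1.pow _).add (mT2.pow _)).cmul _).integrable fun u => ?_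
        simp only
        generalize ∑ i, (u.1 i * ∑ j, D i j * (u.1 j ^ 2 - S j j)) * u.2 i = a
        generalize ∑ i, (u.2 i * ∑ j, D i j * (u.2 j ^ 2 - S j j)) * u.1 i = b
        have e1 := (even_two_mul (k + 1)).add_pow_le (a := a) (b := b)
        have ea : 0 ≤ a ^ (2 * (k + 1)) := (even_two_mul (k + 1)).pow_nonneg a
        have eb : 0 ≤ b ^ (2 * (k + 1)) := (even_two_mul (k + 1)).pow_nonneg b
        have e2 : (2 : ℝ) ^ (2 * (k + 1) - 1) ≤ 4 ^ (k + 1) := by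
          calc (2 : ℝ) ^ (2 * (k + 1) - 1) ≤ 2 ^ (2 * (k + 1)) :=
                pow_le_pow_right₀ (by norm_num) (by omega)
            _ = 4 ^ (k + 1) := by rw [pow_mul]; norm_num
        rw [mul_pow, pow_mul (-2 : ℝ)]
        have e3 : (16 : ℝ) ^ (k + 1) = 4 ^ (k + 1) * 4 ^ (k + 1) := by
          rw [← mul_pow]; norm_num
        rw [e3, mul_assoc, show ((-2 : ℝ) ^ 2) = 4 by norm_num]
        gcongr
        exact e1.trans (by gcongr)
    _ = 16 ^ (k + 1) * (2 * ∫ u : (Fin p → ℝ) × (Fin p → ℝ),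
      (∑ i, (u.1 i * ∑ j, D i j * (u.1 j ^ 2 - S j j)) * u.2 i) ^ (2 * (k + 1)) ∂(μ.prod μ)) := by
        rw [integral_const_mul, integral_add (mT1.pow _).integrable (mT2.pow _).integrable, hT2]
        ring
    _ ≤ 16 ^ (k + 1) * (2 * (quadC M₀ (k + 1) * (p : ℝ) ^ (2 * (k + 1)))) := by gcongr
    _ = _ := by ring

end GS

/-- For `Z ∼ N_p(0,Σ)` with `Σ ∈ 𝓕_α` and `|C̄_ij| ≤ 2`, the centered variable
`g = ∑_{i,j} C̄_ij ((z_i²−σ_ii)(z_j²−σ_jj) − 2σ_ij²)` satisfies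
`𝔼 g^{K₀} ≤ C p^{K₀}` for any even `K₀ ≥ 2`. -/
theorem stmt17 (M M₀ α : ℝ) (hM : 0 < M) (hM₀ : 0 < M₀) (hα : 0 < α)
    (K₀ : ℕ) (hK : 2 ≤ K₀) (hKeven : Even K₀) :
    ∃ C : ℝ, 0 < C ∧
      ∀ (p τ : ℕ), 1 ≤ τ → τ ≤ p →
      ∀ (S : Matrix (Fin p) (Fin p) ℝ), S.IsSymm →
        (∀ v : Fin p → ℝ, 0 ≤ ∑ i, ∑ j, v i * S i j * v j) →
        (∀ v : Fin p → ℝ, ∑ i, ∑ j, v i * S i j * v j ≤ M₀ * ∑ i, v i ^ 2) →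
        (∀ k : ℕ, 1 ≤ k → ∀ j : Fin p,
            ∑ i ∈ Finset.univ.filter
                (fun i : Fin p => k < ((i : ℤ) - (j : ℤ)).natAbs),
              |S i j| ≤ M * (k : ℝ) ^ (-α)) →
      ∀ (Cbar : Matrix (Fin p) (Fin p) ℝ), (∀ i j, |Cbar i j| ≤ 2) →
      ∀ (Ω : Type) (_ : MeasureSpace Ω)
        (_ : IsProbabilityMeasure (ℙ : Measure Ω))
        (Z : Ω → Fin p → ℝ), Measurable Z → IsGaussianVec Z S →
      (∫ ω, (∑ i : Fin p, ∑ j : Fin p,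
            Cbar i j * ((Z ω i ^ 2 - S i i) * (Z ω j ^ 2 - S j j)
              - 2 * S i j ^ 2)) ^ K₀ ∂ℙ)
        ≤ C * (p : ℝ) ^ K₀ := by
  obtain ⟨m, hm⟩ := hKeven
  obtain ⟨k, rfl⟩ : ∃ k, m = k + 1 := ⟨m - 1, by omega⟩
  obtain rfl : K₀ = 2 * (k + 1) := by omega
  have hq := quadC_nonneg M₀ hM₀ (k + 1)
  refine ⟨2 * 16 ^ (k + 1) * quadC M₀ (k + 1) + 1, by positivity, ?_⟩
  intro p τ hτ hτp S hsymm hpsd hub _ Cbar hC Ω _ _ Z hZ hG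
  have hGS : GS S M₀ (Measure.map Z ℙ) := by
    refine ⟨hsymm, hpsd, hub, fun a => ?_⟩
    rw [Measure.map_map (by fun_prop) hZ]
    exact hG a
  have h := hGS.main hM₀ (by omega) Cbar hC k
  rw [integral_map hZ.aemeasurable
    (Continuous.aestronglyMeasurable (by fun_prop))] at h
  refine h.trans ?_
  gcongr
  linarith
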